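/- arXiv:1603.06371 — 2 statements merged into one kernel-verified Lean document; each statement's English description precedes it below -/
import Mathlib

section
/- Let A and B be finite sets with rankings r_A : A → {1, …, |A|} and r_B : B → {1, …, |B|} (both bijections), A nonempty, and let J̃(r_A, r_B) denote the Jaccard index of the extended multisets Ã and B̃. Then J̃(r_A, r_B) = 1 if and only if A = B and r_A = r_B, i.e. the two rankings are identical. -/
/-- The extended multiset of a ranked finite set `A` with ranking `r`:
each element `a ∈ A` occurs with multiplicity `|A| - r a + 1`. -/
def extMultiset {α : Type*} [DecidableEq α] (A : Finset α) (r : α → ℕ) : Multiset α :=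
  A.val.bind (fun a => Multiset.replicate (A.card - r a + 1) a)

/-- The multiset Jaccard index `J(S,T) = |S ∩ T| / |S ∪ T|`. -/
noncomputable def jaccard {α : Type*} [DecidableEq α] (S T : Multiset α) : ℝ :=
  (Multiset.card (S ∩ T) : ℝ) / (Multiset.card (S ∪ T) : ℝ)

theorem count_extMultiset {α : Type*} [DecidableEq α] (A : Finset α) (r : α → ℕ) (a : α) :
    (extMultiset A r).count a = if a ∈ A then A.card - r a + 1 else 0 := by
  have h : (extMultiset A r).count a =
      ∑ b ∈ A, (Multiset.replicate (A.card - r b + 1) b).count a := by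
    rw [extMultiset, Multiset.count_bind]
    rfl
  simp only [h, Multiset.count_replicate, Finset.sum_ite_eq']

theorem mem_extMultiset {α : Type*} [DecidableEq α] {A : Finset α} {r : α → ℕ} {a : α} :
    a ∈ extMultiset A r ↔ a ∈ A := by
  rw [← Multiset.count_pos, count_extMultiset]
  split_ifs with h <;> simp [h]

theorem jaccard_eq_one_iff {α : Type*} [DecidableEq α] {S T : Multiset α} (hS : S ≠ 0) :
    jaccard S T = 1 ↔ S = T := by
  have hpos : 0 < (S ∪ T).card :=
    (Multiset.card_pos.2 hS).trans_le (Multiset.card_le_card Multiset.le_union_left)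
  rw [jaccard, div_eq_one_iff_eq (by exact_mod_cast hpos.ne'), Nat.cast_inj]
  constructor
  · intro h
    have hle : S ∩ T ≤ S ∪ T := Multiset.inter_le_left.trans Multiset.le_union_left
    have heq := Multiset.eq_of_le_of_card_le hle h.ge
    exact inf_eq_sup.1 heq
  · rintro rfl
    exact congrArg Multiset.card (inf_eq_sup.2 rfl)

/-- The extended Jaccard index of two rankings equals 1 iff the two ranked sets and
their rankings coincide. -/
theorem extJaccard_eq_one_iff {α : Type*} [DecidableEq α] (A B : Finset α) (rA rB : α → ℕ)
    (hA : Set.BijOn rA ↑A ↑(Finset.Icc 1 A.card))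
    (hB : Set.BijOn rB ↑B ↑(Finset.Icc 1 B.card))
    (hne : A.Nonempty) :
    jaccard (extMultiset A rA) (extMultiset B rB) = 1 ↔
      (A = B ∧ ∀ a ∈ A, rA a = rB a) := by
  obtain ⟨x, hx⟩ := hne
  have hS : extMultiset A rA ≠ 0 := fun h => by
    simpa [h] using (mem_extMultiset (r := rA)).2 hx
  rw [jaccard_eq_one_iff hS]
  constructor
  · intro h
    obtain rfl : A = B := by
      ext a
      rw [← mem_extMultiset (r := rA), h, mem_extMultiset]
    refine ⟨rfl, fun a ha => ?_⟩
    have hcount := congrArg (Multiset.count a) h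
    simp only [count_extMultiset, if_pos ha] at hcount
    have hrA := Finset.mem_Icc.1 (hA.mapsTo ha)
    have hrB := Finset.mem_Icc.1 (hB.mapsTo ha)
    omega
  · rintro ⟨rfl, h⟩
    ext a
    simp only [count_extMultiset]
    split_ifs with ha
    · rw [h a ha]
    · rfl
end

section
/- The Jaccard distance on finite multisets satisfies the triangle inequality: for finite multisets S, T, U over a common type, defining d(S, T) = 1 − |S ∩ T| / |S ∪ T| whenever S ∪ T is nonempty (and d(S, T) = 0 when both are empty), one has d(S, U) ≤ d(S, T) + d(T, U). Together with d(S, T) = d(T, S), d(S, T) ≥ 0, and d(S, T) = 0 iff S = T, this makes d a metric on finite multisets. -/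
/-- The Jaccard distance on finite multisets: `d(S,T) = 1 - |S ∩ T| / |S ∪ T|`
when `S ∪ T` is nonempty, and `d(∅,∅) = 0`. -/
noncomputable def jaccardDist {α : Type*} [DecidableEq α] (S T : Multiset α) : ℝ :=
  if S ∪ T = 0 then 0
  else 1 - (Multiset.card (S ∩ T) : ℝ) / (Multiset.card (S ∪ T) : ℝ)

theorem Multiset.cast_card_union_add_cast_card_inter {α : Type*} [DecidableEq α]
    (S T : Multiset α) :
    ((S ∪ T).card : ℝ) + (S ∩ T).card = S.card + T.card := by
  rw [← Nat.cast_add, ← Nat.cast_add, ← Multiset.card_add, Multiset.union_add_inter,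
    Multiset.card_add]

theorem Multiset.card_inter_add_card_inter_le {α : Type*} [DecidableEq α] (S T U : Multiset α) :
    (S ∩ T).card + (T ∩ U).card ≤ T.card + (S ∩ U).card := by
  rw [← Multiset.card_add, ← Multiset.card_add]
  refine Multiset.card_le_card (Multiset.le_iff_count.2 fun x => ?_)
  simp only [Multiset.count_add, Multiset.count_inter]
  omega

theorem jaccardDist_eq_div {α : Type*} [DecidableEq α] (S T : Multiset α) :
    jaccardDist S T = ((S ∪ T).card - (S ∩ T).card : ℝ) / (S ∪ T).card := by
  unfold jaccardDist
  split_ifs with h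
  · simp [h]
  · have h' : ((S ∪ T).card : ℝ) ≠ 0 := by simpa using h
    rw [sub_div, div_self h']

theorem Multiset.card_inter_le_card_union {α : Type*} [DecidableEq α] (S T : Multiset α) :
    (S ∩ T).card ≤ (S ∪ T).card :=
  Multiset.card_le_card (Multiset.inter_le_left.trans Multiset.le_union_left)

theorem jaccardDist_comm {α : Type*} [DecidableEq α] (S T : Multiset α) :
    jaccardDist S T = jaccardDist T S := by
  rw [jaccardDist, jaccardDist, Multiset.union_comm, Multiset.inter_comm]

theorem jaccardDist_nonneg {α : Type*} [DecidableEq α] (S T : Multiset α) :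
    0 ≤ jaccardDist S T := by
  rw [jaccardDist_eq_div]
  have h : ((S ∩ T).card : ℝ) ≤ (S ∪ T).card := mod_cast S.card_inter_le_card_union T
  exact div_nonneg (sub_nonneg.2 h) (Nat.cast_nonneg _)

theorem jaccardDist_eq_zero_iff {α : Type*} [DecidableEq α] (S T : Multiset α) :
    jaccardDist S T = 0 ↔ S = T := by
  rw [jaccardDist_eq_div]
  constructor
  · intro h
    have hcard : (S ∪ T).card ≤ (S ∩ T).card := by
      rcases div_eq_zero_iff.1 h with h | h
      · exact_mod_cast (sub_eq_zero.1 h).le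
      · rw [Nat.cast_eq_zero.1 h]
        exact Nat.zero_le _
    have heq : S ∩ T = S ∪ T :=
      Multiset.eq_of_le_of_card_le (Multiset.inter_le_left.trans Multiset.le_union_left) hcard
    exact inf_eq_sup.1 heq
  · rintro rfl
    have h₁ : S ∩ S = S := inf_idem S
    have h₂ : S ∪ S = S := sup_idem S
    rw [h₁, h₂, sub_self, zero_div]

/-- The Jaccard distance decreases when its denominator is enlarged, also if `S ∪ T` is empty. -/
theorem card_sub_card_div_le_jaccardDist {α : Type*} [DecidableEq α] (S T : Multiset α) {M : ℝ}
    (hM : ((S ∪ T).card : ℝ) ≤ M) :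
    ((S ∪ T).card - (S ∩ T).card : ℝ) / M ≤ jaccardDist S T := by
  have h : ((S ∩ T).card : ℝ) ≤ (S ∪ T).card := mod_cast S.card_inter_le_card_union T
  rcases (Nat.cast_nonneg (α := ℝ) (S ∪ T).card).eq_or_lt' with h0 | h0
  · have h1 : ((S ∪ T).card - (S ∩ T).card : ℝ) = 0 := by
      have := Nat.cast_nonneg (α := ℝ) (S ∩ T).card
      linarith
    rw [h1, zero_div]
    exact jaccardDist_nonneg S T
  · rw [jaccardDist_eq_div]
    exact div_le_div_of_nonneg_left (sub_nonneg.2 h) h0 hM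

theorem jaccardDist_triangle {α : Type*} [DecidableEq α] (S T U : Multiset α) :
    jaccardDist S U ≤ jaccardDist S T + jaccardDist T U := by
  rcases (Nat.cast_nonneg (α := ℝ) (S ∪ U).card).eq_or_lt' with h0 | h0
  · rw [jaccardDist_eq_div S U, h0, div_zero]
    exact add_nonneg (jaccardDist_nonneg S T) (jaccardDist_nonneg T U)
  have hST := S.cast_card_union_add_cast_card_inter T
  have hTU := T.cast_card_union_add_cast_card_inter U
  have hSU := S.cast_card_union_add_cast_card_inter U
  have htri : ((S ∩ T).card : ℝ) + (T ∩ U).card ≤ T.card + (S ∩ U).card :=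
    mod_cast S.card_inter_add_card_inter_le T U
  have hS : ((S ∩ T).card : ℝ) ≤ S.card := mod_cast Multiset.card_le_card Multiset.inter_le_left
  have hU : ((T ∩ U).card : ℝ) ≤ U.card := mod_cast Multiset.card_le_card Multiset.inter_le_right
  have hc : (0 : ℝ) ≤ (S ∩ U).card := Nat.cast_nonneg _
  -- `M` is half of `|S| + |U|` plus the sizes of the symmetric differences of `S, T` and `T, U`.
  set M : ℝ := S.card + T.card + U.card - (S ∩ T).card - (T ∩ U).card with hMdef
  have hM : 0 < M := by linarith
  calc jaccardDist S U
      ≤ (((S ∪ T).card - (S ∩ T).card : ℝ) + ((T ∪ U).card - (T ∩ U).card)) / M := by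
        rw [jaccardDist_eq_div, div_le_div_iff₀ h0 hM]
        nlinarith
    _ = ((S ∪ T).card - (S ∩ T).card : ℝ) / M + ((T ∪ U).card - (T ∩ U).card : ℝ) / M :=
        add_div _ _ _
    _ ≤ jaccardDist S T + jaccardDist T U :=
        add_le_add (card_sub_card_div_le_jaccardDist S T (by linarith))
          (card_sub_card_div_le_jaccardDist T U (by linarith))

/-- The Jaccard distance is a metric on finite multisets: it satisfies the triangle
inequality, is symmetric, is nonnegative, and vanishes exactly on equal multisets. -/
theorem jaccardDist_is_metric {α : Type*} [DecidableEq α] (S T U : Multiset α) :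
    jaccardDist S U ≤ jaccardDist S T + jaccardDist T U ∧
    jaccardDist S T = jaccardDist T S ∧
    0 ≤ jaccardDist S T ∧
    (jaccardDist S T = 0 ↔ S = T) := by
  exact ⟨jaccardDist_triangle S T U, jaccardDist_comm S T, jaccardDist_nonneg S T,
    jaccardDist_eq_zero_iff S T⟩
end
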